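/- arXiv:2405.06314 — 4 statements merged into one kernel-verified Lean document; each statement's English description precedes it below -/
import Mathlib

section
/- Let X_n ⊂ ℝ^p be a sequence of closed sets converging in the Painlevé–Kuratowski sense to a nonempty closed set X ⊂ ℝ^p. Then the Kuratowski upper limit of the graphs of the multifunctions x ↦ convexHull(P_{X_n}(x)) is contained in the graph of x ↦ convexHull(P_X(x)), i.e. Limsup_{n→∞} {(x, y) : y ∈ convexHull(P_{X_n}(x))} ⊂ {(x, y) : y ∈ convexHull(P_X(x))}. -/
/-!
A limit `y` of points `y n ∈ conv (S n)`, with the `S n` uniformly bounded in dimension `d`, lies in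
`conv (Limsup S)`: by Carathéodory's theorem each `y n` is a combination of `d + 1` points of `S n`,
and compactness provides a subsequence along which the weights and the points all converge.

This applies to `S n = P_{X_{φ n}} (x n)` with `x n → x`. These sets are uniformly bounded because
`X_{φ n}` contains points converging to some point of `X`. Their upper limit lies in `P_X x`: the
limit of nearest points belongs to `X`, and the inequality `dist (x n) (a n) ≤ dist (x n) (b n)`
passes to the limit for every `b n ∈ X_{φ n}` converging to a point of `X`.
-/

open Filter Topology Metric MeasureTheory

/-- Kuratowski lower limit of a sequence of sets. -/
def KLiminf {α : Type*} [TopologicalSpace α] (A : ℕ → Set α) : Set α :=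
  {x | ∃ u : ℕ → α, (∀ n, u n ∈ A n) ∧ Tendsto u atTop (𝓝 x)}

/-- Kuratowski upper limit of a sequence of sets. -/
def KLimsup {α : Type*} [TopologicalSpace α] (A : ℕ → Set α) : Set α :=
  {x | ∃ φ : ℕ → ℕ, StrictMono φ ∧
    ∃ u : ℕ → α, (∀ n, u n ∈ A (φ n)) ∧ Tendsto u atTop (𝓝 x)}

/-- Painlevé–Kuratowski convergence of a sequence of sets to `L`. -/
def KConv {α : Type*} [TopologicalSpace α] (A : ℕ → Set α) (L : Set α) : Prop :=
  KLiminf A = L ∧ KLimsup A = L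

/-- The Clarke subdifferential of `f` at `x`, relative to the open set `Ω`:
the convex hull of all limits of derivatives of `f` taken at points of
differentiability of `f` inside `Ω` converging to `x`. -/
noncomputable def clarke {p : ℕ} {F : Type*} [NormedAddCommGroup F] [NormedSpace ℝ F]
    (Ω : Set (EuclideanSpace ℝ (Fin p))) (f : EuclideanSpace ℝ (Fin p) → F)
    (x : EuclideanSpace ℝ (Fin p)) : Set (EuclideanSpace ℝ (Fin p) →L[ℝ] F) :=
  convexHull ℝ {u | ∃ y : ℕ → EuclideanSpace ℝ (Fin p),
    (∀ n, y n ∈ Ω) ∧ (∀ n, DifferentiableAt ℝ f (y n)) ∧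
    Tendsto y atTop (𝓝 x) ∧ Tendsto (fun n => fderiv ℝ f (y n)) atTop (𝓝 u)}

/-- The graph of a multifunction `F` restricted to `Ω`. -/
def mgraph {α β : Type*} (Ω : Set α) (F : α → Set β) : Set (α × β) :=
  {q | q.1 ∈ Ω ∧ q.2 ∈ F q.1}

/-- The set of nearest points to `x` in `A`. -/
def nearestPts {α : Type*} [MetricSpace α] (A : Set α) (x : α) : Set α :=
  {a ∈ A | dist x a = infDist x A}

theorem exists_stdSimplex_sum_eq_of_mem_convexHull {𝕜 E : Type*} [Field 𝕜] [LinearOrder 𝕜]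
    [IsStrictOrderedRing 𝕜] [AddCommGroup E] [Module 𝕜 E] [FiniteDimensional 𝕜 E]
    {s : Set E} {y : E} (hy : y ∈ convexHull 𝕜 s) :
    ∃ w ∈ stdSimplex 𝕜 (Fin (Module.finrank 𝕜 E + 1)),
      ∃ z : Fin (Module.finrank 𝕜 E + 1) → E, (∀ i, z i ∈ s) ∧ ∑ i, w i • z i = y := by
  obtain ⟨ι, _, z, w, hz, hind, hw, hw_sum, hwz⟩ := eq_pos_convex_span_of_mem_convexHull hy
  have hcard : Fintype.card ι ≤ Fintype.card (Fin (Module.finrank 𝕜 E + 1)) := by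
    rw [Fintype.card_fin]
    exact hind.card_le_finrank_succ.trans (Nat.succ_le_succ (Submodule.finrank_le _))
  obtain ⟨e⟩ := Function.Embedding.nonempty_of_card_le hcard
  have : Nonempty ι := by
    by_contra hι
    have := not_nonempty_iff.1 hι
    exact zero_ne_one (Fintype.sum_empty w ▸ hw_sum)
  let w' : Fin (Module.finrank 𝕜 E + 1) → 𝕜 := Function.extend e w fun _ ↦ 0
  let z' : Fin (Module.finrank 𝕜 E + 1) → E := z ∘ Function.invFun e
  have w'_apply (i : ι) : w' (e i) = w i := e.injective.extend_apply w _ i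
  have z'_apply (i : ι) : z' (e i) = z i := congrArg z (Function.leftInverse_invFun e.injective i)
  have w'_eq_zero (j) (hj : j ∉ Set.range e) : w' j = 0 := Function.extend_apply' w _ j hj
  refine ⟨w', ⟨fun j ↦ ?nonneg, ?sum_one⟩, z', fun _ ↦ hz ⟨_, rfl⟩, ?sum_smul⟩
  case nonneg =>
    by_cases hj : j ∈ Set.range e
    · obtain ⟨i, rfl⟩ := hj
      exact (hw i).le.trans_eq (w'_apply i).symm
    · exact (w'_eq_zero j hj).ge
  case sum_one =>
    rw [← hw_sum]
    exact (Fintype.sum_of_injective e e.injective w w' w'_eq_zero fun i ↦ (w'_apply i).symm).symm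
  case sum_smul =>
    rw [← hwz]
    refine (Fintype.sum_of_injective e e.injective _ _ (fun j hj ↦ ?_) fun i ↦ ?_).symm
    · rw [w'_eq_zero j hj, zero_smul]
    · rw [w'_apply, z'_apply]

theorem kLimsup_convexHull_subset {E : Type*} [NormedAddCommGroup E] [NormedSpace ℝ E]
    [FiniteDimensional ℝ E] {S : ℕ → Set E} (hS : Bornology.IsBounded (⋃ n, S n)) :
    KLimsup (fun n ↦ convexHull ℝ (S n)) ⊆ convexHull ℝ (KLimsup S) := by
  rintro y₀ ⟨φ, hφ, y, hy, hy_lim⟩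
  choose w hw z hz hwz using fun n ↦ exists_stdSimplex_sum_eq_of_mem_convexHull (hy n)
  let K : Set ((Fin (Module.finrank ℝ E + 1) → ℝ) × (Fin (Module.finrank ℝ E + 1) → E)) :=
    stdSimplex ℝ _ ×ˢ Set.univ.pi fun _ ↦ closure (⋃ n, S n)
  have hK : IsCompact K :=
    (isCompact_stdSimplex ℝ _).prod (isCompact_univ_pi fun _ ↦ hS.isCompact_closure)
  have hwzK (n : ℕ) : (w n, z n) ∈ K :=
    ⟨hw n, fun i _ ↦ subset_closure (Set.mem_iUnion_of_mem (φ n) (hz n i))⟩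
  obtain ⟨⟨w₀, z₀⟩, ⟨hw₀, -⟩, ψ, hψ, hlim⟩ := hK.tendsto_subseq hwzK
  have hw_lim : Tendsto (w ∘ ψ) atTop (𝓝 w₀) := hlim.fst_nhds
  have hz_lim : Tendsto (z ∘ ψ) atTop (𝓝 z₀) := hlim.snd_nhds
  have hz₀ (i) : z₀ i ∈ KLimsup S :=
    ⟨φ ∘ ψ, hφ.comp hψ, fun n ↦ z (ψ n) i, fun n ↦ hz (ψ n) i, hz_lim.apply_nhds i⟩
  have hsum : ∑ i, w₀ i • z₀ i = y₀ := by
    refine tendsto_nhds_unique (tendsto_finsetSum _ fun i _ ↦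
      (hw_lim.apply_nhds i).smul (hz_lim.apply_nhds i)) ?_
    simpa only [Function.comp_def, hwz] using hy_lim.comp hψ.tendsto_atTop
  exact mem_convexHull_of_exists_fintype w₀ z₀ hw₀.1 hw₀.2 hz₀ hsum

theorem kLimsup_apply_subset_of_tendsto {α β : Type*} [TopologicalSpace α] [TopologicalSpace β]
    (F : ℕ → α → Set β) {φ : ℕ → ℕ} (hφ : StrictMono φ) {x : ℕ → α} {x₀ : α}
    (hx : Tendsto x atTop (𝓝 x₀)) :
    KLimsup (fun n ↦ F (φ n) (x n)) ⊆
      Prod.mk x₀ ⁻¹' KLimsup fun n ↦ mgraph Set.univ (F n) := by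
  rintro y₀ ⟨ψ, hψ, y, hy, hy_lim⟩
  exact ⟨φ ∘ ψ, hφ.comp hψ, fun n ↦ (x (ψ n), y n), fun n ↦ ⟨trivial, hy n⟩,
    (hx.comp hψ.tendsto_atTop).prodMk_nhds hy_lim⟩

section NearestPts

variable {α : Type*} [MetricSpace α]

theorem mem_nearestPts_iff {A : Set α} {x a : α} :
    a ∈ nearestPts A x ↔ a ∈ A ∧ ∀ b ∈ A, dist x a ≤ dist x b := by
  refine and_congr_right fun ha ↦ ?_
  rw [← le_infDist ⟨a, ha⟩]
  exact ⟨Eq.le, fun h ↦ h.antisymm (infDist_le_dist_of_mem ha)⟩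

theorem isBounded_iUnion_nearestPts {ι : Type*} {A : ι → Set α} {x u : ι → α}
    (hx : Bornology.IsBounded (Set.range x)) (hu : Bornology.IsBounded (Set.range u))
    (huA : ∀ i, u i ∈ A i) : Bornology.IsBounded (⋃ i, nearestPts (A i) (x i)) := by
  obtain ⟨C, hC⟩ := isBounded_iff.1 (hx.union hu)
  refine (hx.cthickening (δ := C)).subset (Set.iUnion_subset fun i a ha ↦ ?_)
  refine mem_cthickening_of_dist_le a (x i) C _ ⟨i, rfl⟩ ?_
  calc dist a (x i) = dist (x i) a := dist_comm _ _
    _ ≤ dist (x i) (u i) := (mem_nearestPts_iff.1 ha).2 _ (huA i)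
    _ ≤ C := hC (.inl ⟨i, rfl⟩) (.inr ⟨i, rfl⟩)

theorem kLimsup_mgraph_nearestPts_subset {Xs : ℕ → Set α} {X : Set α}
    (hinf : X ⊆ KLiminf Xs) (hsup : KLimsup Xs ⊆ X) :
    KLimsup (fun n ↦ mgraph Set.univ (nearestPts (Xs n))) ⊆
      mgraph Set.univ (nearestPts X) := by
  rintro ⟨x₀, a₀⟩ ⟨φ, hφ, q, hq, hlim⟩
  have ha₀ : a₀ ∈ X := hsup ⟨φ, hφ, fun n ↦ (q n).2, fun n ↦ (hq n).2.1, hlim.snd_nhds⟩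
  refine ⟨trivial, mem_nearestPts_iff.2 ⟨ha₀, fun b hb ↦ ?_⟩⟩
  obtain ⟨u, hu, hub⟩ := hinf hb
  exact le_of_tendsto_of_tendsto' (hlim.fst_nhds.dist hlim.snd_nhds)
    (hlim.fst_nhds.dist (hub.comp hφ.tendsto_atTop))
    fun n ↦ (mem_nearestPts_iff.1 (hq n).2).2 _ (hu (φ n))

end NearestPts

theorem stmt_10_general {E : Type*} [NormedAddCommGroup E] [NormedSpace ℝ E]
    [FiniteDimensional ℝ E] {Xs : ℕ → Set E} {X : Set E} (hXne : X.Nonempty) (hK : KConv Xs X) :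
    KLimsup (fun n ↦ mgraph Set.univ (fun x ↦ convexHull ℝ (nearestPts (Xs n) x))) ⊆
      mgraph Set.univ (fun x ↦ convexHull ℝ (nearestPts X x)) := by
  rintro ⟨x₀, y₀⟩ ⟨φ, hφ, q, hq, hlim⟩
  obtain ⟨b, hb⟩ := hXne
  obtain ⟨u, hu, hub⟩ := hK.1.ge hb
  have hbdd : Bornology.IsBounded (⋃ n, nearestPts (Xs (φ n)) (q n).1) :=
    isBounded_iUnion_nearestPts (isBounded_range_of_tendsto _ hlim.fst_nhds)
      (isBounded_range_of_tendsto _ (hub.comp hφ.tendsto_atTop)) fun n ↦ hu (φ n)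
  have hlimsup : KLimsup (fun n ↦ nearestPts (Xs (φ n)) (q n).1) ⊆ nearestPts X x₀ := by
    intro a ha
    have hgraph : (x₀, a) ∈ KLimsup fun n ↦ mgraph Set.univ (nearestPts (Xs n)) :=
      kLimsup_apply_subset_of_tendsto (fun n ↦ nearestPts (Xs n)) hφ hlim.fst_nhds ha
    exact (kLimsup_mgraph_nearestPts_subset hK.1.ge hK.2.le hgraph).2
  have hy₀ : y₀ ∈ KLimsup fun n ↦ convexHull ℝ (nearestPts (Xs (φ n)) (q n).1) :=
    ⟨id, strictMono_id, fun n ↦ (q n).2, fun n ↦ (hq n).2, hlim.snd_nhds⟩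
  exact ⟨trivial, convexHull_mono hlimsup (kLimsup_convexHull_subset hbdd hy₀)⟩

/-- if closed sets `X_n ⊆ ℝ^p` converge to a nonempty closed set `X`,
then the Kuratowski upper limit of the graphs of `x ↦ conv P_{X_n}(x)` is contained
in the graph of `x ↦ conv P_X(x)`. -/
theorem stmt_10 {p : ℕ} (Xs : ℕ → Set (EuclideanSpace ℝ (Fin p)))
    (hXs : ∀ n, IsClosed (Xs n))
    (X : Set (EuclideanSpace ℝ (Fin p))) (hXne : X.Nonempty) (hXcl : IsClosed X)
    (hK : KConv Xs X) :
    KLimsup (fun n => mgraph Set.univ (fun x => convexHull ℝ (nearestPts (Xs n) x))) ⊆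
      mgraph Set.univ (fun x => convexHull ℝ (nearestPts X x)) := by
  exact stmt_10_general hXne hK
end

section
/- Let X_n ⊂ ℝ² be a sequence of closed sets converging in the Painlevé–Kuratowski sense to a nonempty closed set X ⊂ ℝ². Then the Clarke subdifferentials of the squared distance functions converge graphically: the graphs of ∂(dist_{X_n}²) converge in the Painlevé–Kuratowski sense to the graph of ∂(dist_X²). Equivalently (identifying functionals with vectors via the Euclidean inner product), the graphs of the multifunctions x ↦ convexHull(P_{X_n}(x)) converge in the Painlevé–Kuratowski sense to the graph of x ↦ convexHull(P_X(x)). -/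
/-!
Write `dist(x, A)² = ‖x‖² - 2 φ_A(x)`. Expanding `‖x - a‖²` shows that
`φ_A(x) = sup_{a ∈ A} (⟪x, a⟫ - ‖a‖² / 2)`, so `φ_A` is convex, and its subdifferential at `x` is
`conv P_A(x)`. If `X_n → X`, then `φ_{X_n}(y_n) → φ_X(y)` whenever `y_n → y`, so limits of
subgradients of the `φ_{X_n}` are subgradients of `φ_X`.

Conversely, let `v ∈ conv P_X(x)`. Minimizing `φ_{X_n} + ‖· - (x + v)‖² / 2` gives `y_n` with
`x + v - y_n ∈ conv P_{X_n}(y_n)`. As subdifferentials are monotone, the `y_n` are bounded and each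
of their cluster points is `x`, so the points `(y_n, x + v - y_n)` of the graphs converge to
`(x, v)`.

Finally, the Clarke subdifferential of `dist(·, A)²` at `x` is `{2⟪x - v, ·⟫ : v ∈ conv P_A(x)}`:
limits of derivatives come from nearest points, and `a ∈ P_A(x)` is the only nearest point to the
points `x + t (a - x)`, `0 < t ≤ 1`, where `dist(·, A)²` is therefore differentiable. So the graphs
of the two multifunctions correspond under a homeomorphism that does not depend on `A`.
-/

open Filter Topology Metric MeasureTheory

open scoped RealInnerProductSpace

section ConvexHull

theorem isCompact_convexHull {E : Type*} [AddCommGroup E] [Module ℝ E] [TopologicalSpace E]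
    [ContinuousAdd E] [ContinuousSMul ℝ E] [FiniteDimensional ℝ E] {s : Set E} (hs : IsCompact s) :
    IsCompact (convexHull ℝ s) := by
  let weightedSum (k : ℕ) (q : (Fin k → ℝ) × (Fin k → E)) : E := ∑ i, q.1 i • q.2 i
  -- Carathéodory's theorem bounds the number of points in a convex combination.
  have hull_eq : convexHull ℝ s = ⋃ k ∈ Finset.range (Module.finrank ℝ E + 2),
      weightedSum k '' (stdSimplex ℝ (Fin k) ×ˢ Set.univ.pi fun _ => s) := by
    refine subset_antisymm (fun x hx => ?_) (Set.iUnion₂_subset fun k _ => ?_)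
    · obtain ⟨ι, _, z, w, hzs, hz, hw, hw1, rfl⟩ := eq_pos_convex_span_of_mem_convexHull hx
      have hcard : Fintype.card ι < Module.finrank ℝ E + 2 := by
        have := hz.card_le_finrank_succ
        have := (vectorSpan ℝ (Set.range z)).finrank_le
        lia
      let e := Fintype.equivFin ι
      refine Set.mem_biUnion (Finset.mem_coe.2 (Finset.mem_range.2 hcard))
        ⟨(w ∘ e.symm, z ∘ e.symm), ⟨⟨fun i => (hw _).le, ?_⟩, fun i _ => hzs ⟨_, rfl⟩⟩, ?_⟩
      · rw [← hw1]
        exact e.symm.sum_comp w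
      · exact e.symm.sum_comp fun i => w i • z i
    · rintro _ ⟨⟨w, z⟩, ⟨⟨hw, hw1⟩, hz⟩, rfl⟩
      exact (convex_convexHull ℝ s).sum_mem (fun i _ => hw i) hw1
        fun i _ => subset_convexHull ℝ s (hz i trivial)
  rw [hull_eq]
  refine Finset.isCompact_biUnion _ fun k _ =>
    ((isCompact_stdSimplex ℝ (Fin k)).prod (isCompact_univ_pi fun _ => hs)).image ?_
  fun_prop

theorem mem_convexHull_of_forall_exists_inner_le {E : Type*} [NormedAddCommGroup E]
    [InnerProductSpace ℝ E] [FiniteDimensional ℝ E] {s : Set E} (hs : IsCompact s) {v : E}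
    (h : ∀ w, ∃ q ∈ s, ⟪v, w⟫ ≤ ⟪q, w⟫) : v ∈ convexHull ℝ s := by
  by_contra hv
  obtain ⟨f, r, hf, hr⟩ := geometric_hahn_banach_closed_point (convex_convexHull ℝ s)
    (isCompact_convexHull hs).isClosed hv
  obtain ⟨w, rfl⟩ := (InnerProductSpace.toDual ℝ E).surjective f
  obtain ⟨q, hq, hvq⟩ := h w
  have hqr := hf q (subset_convexHull ℝ s hq)
  simp only [InnerProductSpace.toDual_apply_apply] at hr hqr
  rw [real_inner_comm, real_inner_comm w] at hvq
  linarith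

end ConvexHull

namespace KConv

section Topological

variable {α β : Type*} [TopologicalSpace α] [TopologicalSpace β] {A : ℕ → Set α} {L : Set α}

theorem of_subset (hinf : L ⊆ KLiminf A) (hsup : KLimsup A ⊆ L) : KConv A L := by
  have hle : KLiminf A ⊆ KLimsup A := fun x ⟨u, hu, hux⟩ => ⟨id, strictMono_id, u, hu, hux⟩
  exact ⟨(hle.trans hsup).antisymm hinf, hsup.antisymm (hinf.trans hle)⟩

theorem exists_tendsto (h : KConv A L) {x : α} (hx : x ∈ L) :
    ∃ u : ℕ → α, (∀ n, u n ∈ A n) ∧ Tendsto u atTop (𝓝 x) :=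
  h.1.superset hx

theorem mem_of_tendsto (h : KConv A L) {φ : ℕ → ℕ} (hφ : StrictMono φ) {u : ℕ → α} {x : α}
    (hu : ∀ n, u n ∈ A (φ n)) (hux : Tendsto u atTop (𝓝 x)) : x ∈ L :=
  h.2.subset ⟨φ, hφ, u, hu, hux⟩

theorem nonempty (h : KConv A L) (hL : L.Nonempty) (n : ℕ) : (A n).Nonempty := by
  obtain ⟨x, hx⟩ := hL
  obtain ⟨u, hu, -⟩ := h.exists_tendsto hx
  exact ⟨u n, hu n⟩

theorem comp_strictMono (h : KConv A L) {φ : ℕ → ℕ} (hφ : StrictMono φ) :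
    KConv (fun n => A (φ n)) L := by
  refine of_subset (fun x hx => ?_) fun x ⟨ψ, hψ, u, hu, hux⟩ =>
    h.mem_of_tendsto (hφ.comp hψ) hu hux
  obtain ⟨u, hu, hux⟩ := h.exists_tendsto hx
  exact ⟨u ∘ φ, fun n => hu (φ n), hux.comp hφ.tendsto_atTop⟩

theorem image_homeomorph (h : KConv A L) (e : α ≃ₜ β) : KConv (fun n => e '' A n) (e '' L) := by
  refine of_subset ?_ fun y ⟨φ, hφ, u, hu, huy⟩ => ?_
  · rintro _ ⟨x, hx, rfl⟩
    obtain ⟨u, hu, hux⟩ := h.exists_tendsto hx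
    exact ⟨e ∘ u, fun n => Set.mem_image_of_mem e (hu n), (e.continuous.tendsto x).comp hux⟩
  · simp only [e.image_eq_preimage_symm] at hu ⊢
    exact h.mem_of_tendsto hφ hu ((e.symm.continuous.tendsto y).comp huy)

end Topological

section Metric

variable {α : Type*} [PseudoMetricSpace α] {A : ℕ → Set α} {L : Set α}

theorem eventually_infDist_lt (h : KConv A L) (hL : L.Nonempty) {x : α} {r : ℝ}
    (hr : infDist x L < r) : ∀ᶠ n in atTop, infDist x (A n) < r := by
  obtain ⟨a, haL, har⟩ := (infDist_lt_iff hL).1 hr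
  obtain ⟨u, hu, hua⟩ := h.exists_tendsto haL
  filter_upwards [(tendsto_const_nhds.dist hua).eventually_lt_const har] with n hn
  exact (infDist_le_dist_of_mem (hu n)).trans_lt hn

theorem eventually_lt_infDist [ProperSpace α] (h : KConv A L) (hL : L.Nonempty) {x : α} {r : ℝ}
    (hr : r < infDist x L) : ∀ᶠ n in atTop, r < infDist x (A n) := by
  by_contra hfreq
  obtain ⟨φ, hφ, hφr⟩ := extraction_of_frequently_atTop (not_eventually.1 hfreq)
  obtain ⟨r', hrr', hr'⟩ := exists_between hr
  have hclose (n : ℕ) : ∃ a ∈ A (φ n), dist x a < r' :=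
    (infDist_lt_iff (h.nonempty hL _)).1 ((not_lt.1 (hφr n)).trans_lt hrr')
  choose a haA har using hclose
  obtain ⟨b, hb, ψ, hψ, hab⟩ := (isCompact_closedBall x r').tendsto_subseq
    fun n => mem_closedBall'.2 (har n).le
  have hbL : b ∈ L := h.mem_of_tendsto (hφ.comp hψ) (fun n => haA (ψ n)) hab
  exact ((infDist_le_dist_of_mem hbL).trans (mem_closedBall'.1 hb)).not_gt hr'

theorem tendsto_infDist [ProperSpace α] (h : KConv A L) (hL : L.Nonempty) {y : ℕ → α} {x : α}
    (hy : Tendsto y atTop (𝓝 x)) :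
    Tendsto (fun n => infDist (y n) (A n)) atTop (𝓝 (infDist x L)) := by
  have hfixed : Tendsto (fun n => infDist x (A n)) atTop (𝓝 (infDist x L)) :=
    tendsto_order.2 ⟨fun _ => h.eventually_lt_infDist hL, fun _ => h.eventually_infDist_lt hL⟩
  refine hfixed.congr_dist (squeeze_zero (fun _ => dist_nonneg) (fun n => ?_)
    (tendsto_const_nhds.dist hy |>.trans_eq (by rw [dist_self])))
  simpa using (lipschitz_infDist_pt (A n)).dist_le_mul x (y n)

end Metric

end KConv

section NearestPoints

variable {α : Type*} [MetricSpace α] [ProperSpace α] {A : Set α}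

theorem nearestPts_nonempty (hA : IsClosed A) (hne : A.Nonempty) (x : α) :
    (nearestPts A x).Nonempty := by
  obtain ⟨a, ha, hxa⟩ := hA.exists_infDist_eq_dist hne x
  exact ⟨a, ha, hxa.symm⟩

theorem isCompact_nearestPts (hA : IsClosed A) (x : α) : IsCompact (nearestPts A x) := by
  have hsphere : nearestPts A x = A ∩ sphere x (infDist x A) := by
    ext a
    rw [Set.mem_inter_iff, mem_sphere']
    rfl
  rw [hsphere]
  exact (isCompact_sphere _ _).inter_left hA

theorem exists_subseq_tendsto_nearestPts (hA : IsClosed A) {y p : ℕ → α} {x : α}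
    (hy : Tendsto y atTop (𝓝 x)) (hp : ∀ n, p n ∈ nearestPts A (y n)) :
    ∃ q ∈ nearestPts A x, ∃ φ : ℕ → ℕ, StrictMono φ ∧ Tendsto (p ∘ φ) atTop (𝓝 q) := by
  have hinf : Tendsto (fun n => infDist (y n) A) atTop (𝓝 (infDist x A)) :=
    ((continuous_infDist_pt A).tendsto x).comp hy
  have hbound : ∃ᶠ n in atTop, p n ∈ closedBall x (infDist x A + 1) := by
    have hlim : Tendsto (fun n => dist (y n) x + infDist (y n) A) atTop (𝓝 (infDist x A)) := by
      simpa using (hy.dist (tendsto_const_nhds (x := x))).add hinf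
    refine (hlim.eventually_le_const (lt_add_one _)).frequently.mono fun n hn => ?_
    rw [← (hp n).2] at hn
    exact (dist_triangle_left (p n) x (y n)).trans (by linarith)
  obtain ⟨q, -, φ, hφ, hpq⟩ := tendsto_subseq_of_frequently_bounded isBounded_closedBall hbound
  refine ⟨q, ⟨hA.mem_of_tendsto hpq (.of_forall fun n => (hp _).1), ?_⟩, φ, hφ, hpq⟩
  refine tendsto_nhds_unique ((hy.comp hφ.tendsto_atTop).dist hpq) ?_
  exact (hinf.comp hφ.tendsto_atTop).congr fun n => (hp (φ n)).2.symm

theorem continuousAt_of_mem_nearestPts (hA : IsClosed A) {P : α → α}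
    (hP : ∀ z, P z ∈ nearestPts A z) {y : α} (hy : (nearestPts A y).Subsingleton) :
    ContinuousAt P y := by
  refine tendsto_of_subseq_tendsto fun z hz => ?_
  obtain ⟨q, hq, φ, -, hzq⟩ := exists_subseq_tendsto_nearestPts hA hz fun n => hP (z n)
  exact ⟨φ, hy hq (hP y) ▸ hzq⟩

end NearestPoints

theorem nearestPts_lineMap {E P : Type*} [NormedAddCommGroup E] [NormedSpace ℝ E]
    [StrictConvexSpace ℝ E] [MetricSpace P] [NormedAddTorsor E P] {A : Set P} {x a : P}
    (ha : a ∈ nearestPts A x) {t : ℝ} (ht : t ∈ Set.Ioc 0 1) :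
    nearestPts A (AffineMap.lineMap x a t) = {a} := by
  set z := AffineMap.lineMap x a t with hz
  have hxz : dist x z = t * dist x a := by
    rw [hz, dist_left_lineMap, Real.norm_of_nonneg ht.1.le]
  have hza : dist z a = (1 - t) * dist x a := by
    rw [hz, dist_lineMap_right, Real.norm_of_nonneg (sub_nonneg.2 ht.2)]
  have hamin : dist z a = infDist z A := by
    refine le_antisymm ?_ (infDist_le_dist_of_mem ha.1)
    have := infDist_le_infDist_add_dist (s := A) (x := x) (y := z)
    linarith [ha.2]
  refine Set.eq_singleton_iff_unique_mem.2 ⟨⟨ha.1, hamin⟩, fun q hq => ?_⟩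
  have hzq : dist z q = dist z a := hq.2.trans hamin.symm
  have hxq : dist x q = dist x a := by
    refine le_antisymm ?_ (ha.2.trans_le (infDist_le_dist_of_mem hq.1))
    linarith [dist_triangle x z q]
  have hzq' : z = AffineMap.lineMap x q t :=
    eq_lineMap_of_dist_eq_mul_of_dist_eq_mul (by rw [hxz, hxq]) (by rw [hzq, hza, hxq])
  rw [hz, AffineMap.lineMap_apply, AffineMap.lineMap_apply] at hzq'
  exact (vsub_left_cancel (smul_right_injective E ht.1.ne' (vadd_right_cancel x hzq'))).symm

section Subgradient

variable {E : Type*} [NormedAddCommGroup E] [InnerProductSpace ℝ E] {f : E → ℝ} {x y v w : E}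

/-- `v` is a subgradient of `f` at `x` in the sense of convex analysis. No convexity of `f` is
imposed. -/
def IsSubgradient (f : E → ℝ) (x v : E) : Prop :=
  ∀ y, f x + ⟪v, y - x⟫ ≤ f y

namespace IsSubgradient

theorem inner_sub_sub_nonneg (hv : IsSubgradient f x v) (hw : IsSubgradient f y w) :
    0 ≤ ⟪v - w, x - y⟫ := by
  have hxy := hv y
  have hyx := hw x
  rw [← neg_sub x y, inner_neg_right] at hxy
  rw [inner_sub_left]
  linarith

/-- In terms of the resolvent `J = (1 + ∂f)⁻¹`, this is `‖J v - J w‖ ≤ ‖v - w‖`. -/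
theorem norm_sub_le (hv : IsSubgradient f x (v - x)) (hw : IsSubgradient f y (w - y)) :
    ‖x - y‖ ≤ ‖v - w‖ := by
  have hmono := hv.inner_sub_sub_nonneg hw
  rw [sub_sub_sub_comm, inner_sub_left, real_inner_self_eq_norm_mul_norm, sub_nonneg] at hmono
  rcases (norm_nonneg (x - y)).eq_or_lt with h0 | hpos
  · exact h0 ▸ norm_nonneg _
  · exact le_of_mul_le_mul_right (hmono.trans (real_inner_le_norm _ _)) hpos

theorem of_tendsto {ι : Type*} {l : Filter ι} [l.NeBot] {g : ι → E → ℝ} {y u : ι → E}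
    (hg : ∀ z, Tendsto (fun i => g i z) l (𝓝 (f z)))
    (hgy : Tendsto (fun i => g i (y i)) l (𝓝 (f x))) (hy : Tendsto y l (𝓝 x))
    (hu : Tendsto u l (𝓝 v)) (h : ∀ i, IsSubgradient (g i) (y i) (u i)) : IsSubgradient f x v :=
  fun z => le_of_tendsto_of_tendsto' (hgy.add (hu.inner (hy.const_sub z))) (hg z) fun i => h i z

theorem eq_of_hasGradientAt [CompleteSpace E] (hv : IsSubgradient f x v)
    (hw : HasGradientAt f w x) : v = w := by
  have hmin : IsLocalMin (fun y => f y - ⟪v, y⟫) x := .of_forall fun y => by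
    have := hv y
    rw [inner_sub_right] at this
    linarith
  have hzero := hmin.hasFDerivAt_eq_zero (hw.hasFDerivAt.sub (innerSL ℝ v).hasFDerivAt)
  exact (InnerProductSpace.toDual ℝ E).injective (sub_eq_zero.1 hzero).symm

theorem hasGradientAt [CompleteSpace E] {G : E → E} (hG : ∀ z, IsSubgradient f z (G z))
    (hc : ContinuousAt G x) : HasGradientAt f (G x) x := by
  rw [hasGradientAt_iff_isLittleO, Asymptotics.isLittleO_iff]
  intro ε hε
  filter_upwards [hc.eventually (closedBall_mem_nhds (G x) hε)] with z hz
  have hlower := hG x z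
  have hupper : f z - f x - ⟪G x, z - x⟫ ≤ ⟪G z - G x, z - x⟫ := by
    have := hG z x
    rw [← neg_sub z x, inner_neg_right] at this
    rw [inner_sub_left]
    linarith
  rw [Real.norm_of_nonneg (by linarith)]
  calc f z - f x - ⟪G x, z - x⟫ ≤ ⟪G z - G x, z - x⟫ := hupper
    _ ≤ ‖G z - G x‖ * ‖z - x‖ := real_inner_le_norm _ _
    _ ≤ ε * ‖z - x‖ := by gcongr; exact mem_closedBall_iff_norm.1 hz

end IsSubgradient

end Subgradient

section Asplund

variable {E : Type*} [NormedAddCommGroup E] {A : Set E}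

/-- The Asplund function `x ↦ (‖x‖² - dist(x, A)²) / 2` of a set `A`. For nonempty `A` it is the
convex function `x ↦ sup_{a ∈ A} (⟪x, a⟫ - ‖a‖² / 2)`. -/
noncomputable def asplund (A : Set E) (x : E) : ℝ :=
  (‖x‖ ^ 2 - infDist x A ^ 2) / 2

theorem continuous_asplund (A : Set E) : Continuous (asplund A) := by
  have := continuous_infDist_pt A
  unfold asplund
  fun_prop

theorem tendsto_asplund [ProperSpace E] {As : ℕ → Set E} (h : KConv As A) (hA : A.Nonempty)
    {y : ℕ → E} {x : E} (hy : Tendsto y atTop (𝓝 x)) :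
    Tendsto (fun n => asplund (As n) (y n)) atTop (𝓝 (asplund A x)) :=
  ((hy.norm.pow 2).sub ((h.tendsto_infDist hA hy).pow 2)).div_const 2

variable [InnerProductSpace ℝ E]

theorem inner_sub_le_asplund {a : E} (ha : a ∈ A) (x : E) :
    ⟪x, a⟫ - ‖a‖ ^ 2 / 2 ≤ asplund A x := by
  have hle : infDist x A ^ 2 ≤ ‖x - a‖ ^ 2 :=
    pow_le_pow_left₀ infDist_nonneg (dist_eq_norm x a ▸ infDist_le_dist_of_mem ha) 2
  rw [norm_sub_sq_real] at hle
  rw [asplund]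
  linarith

theorem asplund_eq_of_mem_nearestPts {x a : E} (ha : a ∈ nearestPts A x) :
    asplund A x = ⟪x, a⟫ - ‖a‖ ^ 2 / 2 := by
  rw [asplund, ← ha.2, dist_eq_norm, norm_sub_sq_real]
  ring

theorem isSubgradient_asplund_of_mem_nearestPts {x a : E} (ha : a ∈ nearestPts A x) :
    IsSubgradient (asplund A) x a := fun y => by
  rw [asplund_eq_of_mem_nearestPts ha, inner_sub_right, real_inner_comm y, real_inner_comm x]
  linarith [inner_sub_le_asplund ha.1 y]

theorem isSubgradient_asplund_of_mem_convexHull {x v : E}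
    (hv : v ∈ convexHull ℝ (nearestPts A x)) : IsSubgradient (asplund A) x v := fun y => by
  have hhalf : Convex ℝ {u : E | ⟪y - x, u⟫ ≤ asplund A y - asplund A x} :=
    convex_halfSpace_le (innerₗ E (y - x)).isLinear _
  have hvy : ⟪y - x, v⟫ ≤ asplund A y - asplund A x := by
    refine convexHull_min (fun a ha => ?_) hhalf hv
    have := isSubgradient_asplund_of_mem_nearestPts ha y
    rw [Set.mem_ofPred_eq, real_inner_comm]
    linarith
  rw [real_inner_comm]
  linarith

/-- The directional derivative of `asplund A` at `x` in direction `w` is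
`sup_{q ∈ P_A(x)} ⟪q, w⟫`: nearest points to `x + t • w` accumulate at a point of `P_A(x)`
as `t ↓ 0`. -/
theorem exists_mem_nearestPts_inner_le [ProperSpace E] (hA : IsClosed A) (hne : A.Nonempty)
    {x v : E} {C : ℝ} (hv : ∀ y, asplund A x + ⟪v, y - x⟫ - C * ‖y - x‖ ^ 2 ≤ asplund A y) (w : E) :
    ∃ q ∈ nearestPts A x, ⟪v, w⟫ ≤ ⟪q, w⟫ := by
  obtain ⟨t, -, htpos, ht⟩ := exists_seq_strictAnti_tendsto (0 : ℝ)
  have hy : Tendsto (fun n => x + t n • w) atTop (𝓝 x) := by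
    simpa using (ht.smul_const w).const_add x
  choose p hp using fun n => nearestPts_nonempty hA hne (x + t n • w)
  obtain ⟨q, hq, φ, hφ, hpq⟩ := exists_subseq_tendsto_nearestPts hA hy hp
  have hquotient (n : ℕ) : ⟪v, w⟫ - C * ‖w‖ ^ 2 * t n ≤ ⟪p n, w⟫ := by
    have hforward := hv (x + t n • w)
    have hbackward := isSubgradient_asplund_of_mem_nearestPts (hp n) x
    rw [add_sub_cancel_left, inner_smul_right, norm_smul, mul_pow, Real.norm_eq_abs,
      sq_abs] at hforward
    rw [sub_add_cancel_left, inner_neg_right, inner_smul_right] at hbackward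
    refine le_of_mul_le_mul_left ?_ (htpos n)
    linear_combination hforward + hbackward
  have hlim : Tendsto (fun n => ⟪v, w⟫ - C * ‖w‖ ^ 2 * t n) atTop (𝓝 ⟪v, w⟫) := by
    simpa using (ht.const_mul (C * ‖w‖ ^ 2)).const_sub ⟪v, w⟫
  exact ⟨q, hq, le_of_tendsto_of_tendsto' (hlim.comp hφ.tendsto_atTop)
    (hpq.inner tendsto_const_nhds) fun n => hquotient (φ n)⟩

theorem exists_forall_asplund_add_sq_le [ProperSpace E] (hne : A.Nonempty) (c : E) :
    ∃ y, ∀ z, asplund A y + ‖y - c‖ ^ 2 / 2 ≤ asplund A z + ‖z - c‖ ^ 2 / 2 := by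
  obtain ⟨a, ha⟩ := hne
  have hcont : Continuous fun y => asplund A y + ‖y - c‖ ^ 2 / 2 := by
    have := continuous_asplund A
    fun_prop
  refine hcont.exists_forall_le (tendsto_atTop_mono (f := fun y =>
    dist (c - a) y ^ 2 / 2 + (‖c‖ ^ 2 - ‖c - a‖ ^ 2 - ‖a‖ ^ 2) / 2) (fun y => ?_) ?_)
  · have hle := inner_sub_le_asplund ha y
    have hexpand : ‖c - a - y‖ ^ 2 = ‖c - a‖ ^ 2 - 2 * (⟪y, c⟫ - ⟪y, a⟫) + ‖y‖ ^ 2 := by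
      rw [norm_sub_sq_real, real_inner_comm, inner_sub_right]
    rw [dist_eq_norm, hexpand, norm_sub_sq_real y]
    linarith
  · exact tendsto_atTop_add_const_right _ _ ((tendsto_pow_atTop two_ne_zero).comp
      (tendsto_dist_left_cocompact_atTop _) |>.atTop_div_const two_pos)

end Asplund

section GraphConvergence

variable {E : Type*} [NormedAddCommGroup E] [InnerProductSpace ℝ E] [FiniteDimensional ℝ E]
  {A : Set E}

theorem mem_convexHull_nearestPts (hA : IsClosed A) (hne : A.Nonempty) {x v : E} {C : ℝ}
    (hv : ∀ y, asplund A x + ⟪v, y - x⟫ - C * ‖y - x‖ ^ 2 ≤ asplund A y) :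
    v ∈ convexHull ℝ (nearestPts A x) :=
  have : ProperSpace E := FiniteDimensional.proper_real E
  mem_convexHull_of_forall_exists_inner_le (isCompact_nearestPts hA x)
    (exists_mem_nearestPts_inner_le hA hne hv)

theorem isSubgradient_asplund_iff (hA : IsClosed A) (hne : A.Nonempty) {x v : E} :
    IsSubgradient (asplund A) x v ↔ v ∈ convexHull ℝ (nearestPts A x) :=
  ⟨fun hv => mem_convexHull_nearestPts hA hne (C := 0) fun y => by simpa using hv y,
    isSubgradient_asplund_of_mem_convexHull⟩

/-- Surjectivity of `1 + ∂(asplund A)`, as in Minty's theorem. -/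
theorem exists_sub_mem_convexHull_nearestPts (hA : IsClosed A) (hne : A.Nonempty) (c : E) :
    ∃ y, c - y ∈ convexHull ℝ (nearestPts A y) := by
  have : ProperSpace E := FiniteDimensional.proper_real E
  obtain ⟨y, hy⟩ := exists_forall_asplund_add_sq_le hne c
  refine ⟨y, mem_convexHull_nearestPts hA hne (C := 1 / 2) fun z => ?_⟩
  have hexpand : ‖z - c‖ ^ 2 = ‖z - y‖ ^ 2 - 2 * ⟪c - y, z - y⟫ + ‖y - c‖ ^ 2 := by
    rw [← sub_sub_sub_cancel_right z c y, norm_sub_sq_real, real_inner_comm, norm_sub_rev c]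
  linarith [hy z]

variable {As : ℕ → Set E}

theorem mem_convexHull_nearestPts_of_tendsto (h : KConv As A) (hA : IsClosed A)
    (hne : A.Nonempty) {y u : ℕ → E} {x v : E} (hy : Tendsto y atTop (𝓝 x))
    (hu : Tendsto u atTop (𝓝 v)) (hmem : ∀ n, u n ∈ convexHull ℝ (nearestPts (As n) (y n))) :
    v ∈ convexHull ℝ (nearestPts A x) := by
  have : ProperSpace E := FiniteDimensional.proper_real E
  exact (isSubgradient_asplund_iff hA hne).1 <| .of_tendsto
    (fun z => tendsto_asplund h hne tendsto_const_nhds) (tendsto_asplund h hne hy) hy hu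
    fun n => isSubgradient_asplund_of_mem_convexHull (hmem n)

/-- Convergence of resolvents. They are nonexpansive and that of `asplund (As n)` maps `2 • a` to
`a` for `a ∈ As n`, so the `y n` are bounded. Every cluster point solves the limit problem, whose
only solution is `x`. -/
theorem tendsto_of_sub_mem_convexHull_nearestPts (h : KConv As A) (hA : IsClosed A)
    (hne : A.Nonempty) {y : ℕ → E} {x c : E} (hx : c - x ∈ convexHull ℝ (nearestPts A x))
    (hy : ∀ n, c - y n ∈ convexHull ℝ (nearestPts (As n) (y n))) : Tendsto y atTop (𝓝 x) := by
  have : ProperSpace E := FiniteDimensional.proper_real E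
  obtain ⟨a, ha⟩ := hne
  obtain ⟨s, hs, hsa⟩ := h.exists_tendsto ha
  have hnear (n : ℕ) : ‖y n - s n‖ ≤ ‖c - (2 : ℝ) • s n‖ := by
    have hself : s n ∈ nearestPts (As n) (s n) :=
      ⟨hs n, by rw [dist_self, infDist_zero_of_mem (hs n)]⟩
    refine (isSubgradient_asplund_of_mem_convexHull (hy n)).norm_sub_le ?_
    simpa [two_smul] using isSubgradient_asplund_of_mem_nearestPts hself
  have hbound : ∀ᶠ n in atTop, y n ∈ closedBall 0 (‖c - (2 : ℝ) • a‖ + ‖a‖ + 1) := by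
    have hlim := ((hsa.const_smul (2 : ℝ)).const_sub c).norm.add hsa.norm
    filter_upwards [hlim.eventually_le_const (lt_add_one _)] with n hn
    rw [mem_closedBall_zero_iff]
    linarith [hnear n, norm_le_norm_sub_add (y n) (s n)]
  refine (isCompact_closedBall _ _).tendsto_nhds_of_unique_mapClusterPt hbound fun z _ hz => ?_
  obtain ⟨φ, hφ, hyz⟩ := hz.tendsto_subseq
  have hzc : c - z ∈ convexHull ℝ (nearestPts A z) :=
    mem_convexHull_nearestPts_of_tendsto (h.comp_strictMono hφ) hA ⟨a, ha⟩ hyz (hyz.const_sub c)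
      fun n => hy (φ n)
  have hzx := (isSubgradient_asplund_of_mem_convexHull hzc).norm_sub_le
    (isSubgradient_asplund_of_mem_convexHull hx)
  rwa [sub_self, norm_zero, norm_le_zero_iff, sub_eq_zero] at hzx

theorem KConv.mgraph_convexHull_nearestPts (h : KConv As A) (hAs : ∀ n, IsClosed (As n))
    (hA : IsClosed A) (hne : A.Nonempty) :
    KConv (fun n => mgraph Set.univ fun x => convexHull ℝ (nearestPts (As n) x))
      (mgraph Set.univ fun x => convexHull ℝ (nearestPts A x)) := by
  refine .of_subset ?_ ?_
  · rintro ⟨x, v⟩ ⟨-, hv⟩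
    choose y hy using fun n =>
      exists_sub_mem_convexHull_nearestPts (hAs n) (h.nonempty hne n) (x + v)
    have hyx : Tendsto y atTop (𝓝 x) := tendsto_of_sub_mem_convexHull_nearestPts h hA hne
      (by simpa using hv) hy
    refine ⟨fun n => (y n, x + v - y n), fun n => ⟨trivial, hy n⟩, hyx.prodMk_nhds ?_⟩
    simpa using hyx.const_sub (x + v)
  · rintro ⟨x, v⟩ ⟨φ, hφ, q, hq, hqxv⟩
    exact ⟨trivial, mem_convexHull_nearestPts_of_tendsto (h.comp_strictMono hφ) hA hne
      hqxv.fst_nhds hqxv.snd_nhds fun n => (hq n).2⟩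

end GraphConvergence

section SquaredDistance

open InnerProductSpace (toDual)

variable {E : Type*} [NormedAddCommGroup E] [InnerProductSpace ℝ E] {A : Set E}

theorem hasGradientAt_sq_infDist_of_asplund [CompleteSpace E] {x v : E}
    (h : HasGradientAt (asplund A) v x) :
    HasGradientAt (fun z => infDist z A ^ 2) ((2 : ℝ) • (x - v)) x := by
  have hsq : (fun z => infDist z A ^ 2) = fun z => ‖z‖ ^ 2 - 2 * asplund A z := by
    funext z
    rw [asplund]
    ring
  rw [hsq, hasGradientAt_iff_hasFDerivAt]
  refine ((hasStrictFDerivAt_norm_sq x).hasFDerivAt.sub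
    (h.hasFDerivAt.const_mul 2)).congr_fderiv ?_
  ext w
  simp [mul_sub]

theorem fderiv_sq_infDist [CompleteSpace E] {y a : E} (ha : a ∈ nearestPts A y)
    (hd : DifferentiableAt ℝ (fun z => infDist z A ^ 2) y) :
    fderiv ℝ (fun z => infDist z A ^ 2) y = toDual ℝ E ((2 : ℝ) • (y - a)) := by
  have hasplund : DifferentiableAt ℝ (asplund A) y :=
    (((differentiableAt_id (𝕜 := ℝ)).norm_sq ℝ).fun_sub hd).mul_const (2 : ℝ)⁻¹
  rw [(isSubgradient_asplund_of_mem_nearestPts ha).eq_of_hasGradientAt hasplund.hasGradientAt]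
  exact (hasGradientAt_sq_infDist_of_asplund hasplund.hasGradientAt).hasFDerivAt.fderiv

theorem hasGradientAt_sq_infDist [ProperSpace E] (hA : IsClosed A) {y a : E}
    (hy : nearestPts A y = {a}) :
    HasGradientAt (fun z => infDist z A ^ 2) ((2 : ℝ) • (y - a)) y := by
  have ha : a ∈ nearestPts A y := hy.superset rfl
  choose P hP using nearestPts_nonempty hA ⟨a, ha.1⟩
  have hPy : P y = a := hy.subset (hP y)
  refine hasGradientAt_sq_infDist_of_asplund (hPy ▸ IsSubgradient.hasGradientAt
    (fun z => isSubgradient_asplund_of_mem_nearestPts (hP z)) ?_)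
  exact continuousAt_of_mem_nearestPts hA hP (hy ▸ Set.subsingleton_singleton)

theorem exists_mem_nearestPts_of_tendsto_fderiv [ProperSpace E] (hA : IsClosed A)
    (hne : A.Nonempty) {x : E} {u : E →L[ℝ] ℝ} {y : ℕ → E} (hy : Tendsto y atTop (𝓝 x))
    (hd : ∀ n, DifferentiableAt ℝ (fun z => infDist z A ^ 2) (y n))
    (hu : Tendsto (fun n => fderiv ℝ (fun z => infDist z A ^ 2) (y n)) atTop (𝓝 u)) :
    ∃ a ∈ nearestPts A x, toDual ℝ E ((2 : ℝ) • (x - a)) = u := by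
  choose P hP using fun n => nearestPts_nonempty hA hne (y n)
  obtain ⟨a, ha, φ, hφ, hPa⟩ := exists_subseq_tendsto_nearestPts hA hy hP
  refine ⟨a, ha, tendsto_nhds_unique ?_ (hu.comp hφ.tendsto_atTop)⟩
  refine (((toDual ℝ E).continuous.tendsto _).comp
    (((hy.comp hφ.tendsto_atTop).sub hPa).const_smul (2 : ℝ))).congr fun n => ?_
  exact (fderiv_sq_infDist (hP (φ n)) (hd (φ n))).symm

/-- Approach `x` along the segment to `a`: on it, `a` is the only nearest point. -/
theorem exists_tendsto_fderiv_sq_infDist [ProperSpace E] (hA : IsClosed A) {x a : E}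
    (ha : a ∈ nearestPts A x) :
    ∃ y : ℕ → E, (∀ n, DifferentiableAt ℝ (fun z => infDist z A ^ 2) (y n)) ∧
      Tendsto y atTop (𝓝 x) ∧
      Tendsto (fun n => fderiv ℝ (fun z => infDist z A ^ 2) (y n)) atTop
        (𝓝 (toDual ℝ E ((2 : ℝ) • (x - a)))) := by
  obtain ⟨t, -, ht01, ht⟩ := exists_seq_strictAnti_tendsto' (zero_lt_one' ℝ)
  let y (n : ℕ) : E := AffineMap.lineMap x a (t n)
  have hgrad (n : ℕ) : HasGradientAt (fun z => infDist z A ^ 2) ((2 : ℝ) • (y n - a)) (y n) :=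
    hasGradientAt_sq_infDist hA (nearestPts_lineMap ha (Set.Ioo_subset_Ioc_self (ht01 n)))
  have hy : Tendsto y atTop (𝓝 x) := by
    have hline : Continuous (AffineMap.lineMap x a : ℝ →ᵃ[ℝ] E) := AffineMap.lineMap_continuous
    simpa [Function.comp_def] using (hline.tendsto 0).comp ht
  refine ⟨y, fun n => (hgrad n).differentiableAt, hy, ?_⟩
  simp_rw [fun n => (hgrad n).hasFDerivAt.fderiv]
  exact ((toDual ℝ E).continuous.tendsto _).comp ((hy.sub_const a).const_smul (2 : ℝ))

/-- The homeomorphism `(x, v) ↦ (x, 2⟪x - v, ·⟫)`. It carries the graph of `conv P_A` to the graph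
of the Clarke subdifferential of `dist(·, A)²`. -/
noncomputable def sqDistHomeomorph (E : Type*) [NormedAddCommGroup E] [InnerProductSpace ℝ E]
    [CompleteSpace E] : E × E ≃ₜ E × (E →L[ℝ] ℝ) where
  toFun q := (q.1, toDual ℝ E ((2 : ℝ) • (q.1 - q.2)))
  invFun q := (q.1, q.1 - (2 : ℝ)⁻¹ • (toDual ℝ E).symm q.2)
  left_inv q := by ext1 <;> simp
  right_inv q := by ext1 <;> simp
  continuous_toFun := continuous_fst.prodMk <|
    (toDual ℝ E).continuous.comp ((continuous_fst.sub continuous_snd).const_smul (2 : ℝ))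
  continuous_invFun := continuous_fst.prodMk <| continuous_fst.sub <|
    ((toDual ℝ E).symm.continuous.comp continuous_snd).const_smul (2 : ℝ)⁻¹

end SquaredDistance

section Clarke

open InnerProductSpace (toDual)

variable {p : ℕ} {A : Set (EuclideanSpace ℝ (Fin p))}

theorem clarke_sq_infDist (hA : IsClosed A) (hne : A.Nonempty) (x : EuclideanSpace ℝ (Fin p)) :
    clarke Set.univ (fun y => infDist y A ^ 2) x =
      (fun v => toDual ℝ _ ((2 : ℝ) • (x - v))) '' convexHull ℝ (nearestPts A x) := by
  let dual : EuclideanSpace ℝ (Fin p) →ₗ[ℝ] (EuclideanSpace ℝ (Fin p) →L[ℝ] ℝ) :=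
    (innerSL ℝ).toLinearMap
  let g := dual.toAffineMap.comp ((2 : ℝ) • (AffineMap.const ℝ _ x - AffineMap.id ℝ _))
  change _ = g '' _
  rw [g.image_convexHull, clarke]
  congr 1
  ext u
  constructor
  · rintro ⟨y, -, hd, hy, hu⟩
    exact exists_mem_nearestPts_of_tendsto_fderiv hA hne hy hd hu
  · rintro ⟨a, ha, rfl⟩
    obtain ⟨y, hd, hy, hu⟩ := exists_tendsto_fderiv_sq_infDist hA ha
    exact ⟨y, fun _ => trivial, hd, hy, hu⟩

theorem mgraph_clarke_sq_infDist (hA : IsClosed A) (hne : A.Nonempty) :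
    mgraph Set.univ (clarke Set.univ fun y => infDist y A ^ 2) =
      sqDistHomeomorph _ '' mgraph Set.univ fun x => convexHull ℝ (nearestPts A x) := by
  ext ⟨x, u⟩
  simp only [mgraph, clarke_sq_infDist hA hne]
  constructor
  · rintro ⟨-, v, hv, hvu⟩
    exact ⟨(x, v), ⟨trivial, hv⟩, Prod.ext rfl hvu⟩
  · rintro ⟨⟨_, v⟩, ⟨-, hv⟩, heq⟩
    obtain ⟨rfl, rfl⟩ := Prod.mk.inj heq
    exact ⟨trivial, v, hv, rfl⟩

end Clarke

theorem stmt_11_general {p : ℕ} (Xs : ℕ → Set (EuclideanSpace ℝ (Fin p)))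
    (hXs : ∀ n, IsClosed (Xs n))
    (X : Set (EuclideanSpace ℝ (Fin p))) (hXne : X.Nonempty) (hXcl : IsClosed X)
    (hK : KConv Xs X) :
    KConv (fun n => mgraph Set.univ (clarke Set.univ (fun y => (infDist y (Xs n)) ^ 2)))
        (mgraph Set.univ (clarke Set.univ (fun y => (infDist y X) ^ 2))) ∧
      KConv (fun n => mgraph Set.univ (fun x => convexHull ℝ (nearestPts (Xs n) x)))
        (mgraph Set.univ (fun x => convexHull ℝ (nearestPts X x))) := by
  have hP := hK.mgraph_convexHull_nearestPts hXs hXcl hXne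
  refine ⟨?_, hP⟩
  simp_rw [mgraph_clarke_sq_infDist hXcl hXne,
    fun n => mgraph_clarke_sq_infDist (hXs n) (hK.nonempty hXne n)]
  exact hP.image_homeomorph (sqDistHomeomorph _)

/-- in the plane, Painlevé–Kuratowski convergence of closed sets
`X_n → X` (with `X` nonempty) implies graphical convergence of the Clarke
subdifferentials of the squared distance functions, equivalently of the
multifunctions `x ↦ conv P_{X_n}(x)`. -/
theorem stmt_11 (Xs : ℕ → Set (EuclideanSpace ℝ (Fin 2)))
    (hXs : ∀ n, IsClosed (Xs n))
    (X : Set (EuclideanSpace ℝ (Fin 2))) (hXne : X.Nonempty) (hXcl : IsClosed X)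
    (hK : KConv Xs X) :
    KConv (fun n => mgraph Set.univ (clarke Set.univ (fun y => (infDist y (Xs n)) ^ 2)))
        (mgraph Set.univ (clarke Set.univ (fun y => (infDist y X) ^ 2))) ∧
      KConv (fun n => mgraph Set.univ (fun x => convexHull ℝ (nearestPts (Xs n) x)))
        (mgraph Set.univ (fun x => convexHull ℝ (nearestPts X x))) :=
  stmt_11_general Xs hXs X hXne hXcl hK
end

section
/- (Zarankiewicz) Let X be a second countable metric space and let E_n (n ∈ ℕ) be an arbitrary sequence of subsets of X. Then there exists a subsequence E_{k_n} that converges in the Painlevé–Kuratowski sense to some (closed) subset E of X. -/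
/-!
The hitting pattern of a set records which members of a countable basis it meets. Patterns are
points of a countable product of finite spaces, so by compactness a subsequence exists along which
every basic open set is either eventually met or eventually missed. A basic neighbourhood of a
point of the upper limit is met infinitely often, hence not eventually missed, hence eventually
met; this puts the point in the lower limit.

The lower limit asks for a point in *every* set of the sequence, so it is empty as soon as one set
is. One therefore first extracts a subsequence of nonempty sets; when this is impossible, the sets
are eventually empty and so is the upper limit.
-/

open Filter Topology Metric MeasureTheory

theorem exists_mem_forall_lt_mem_of_antitone {α : Type*} {A : Set α} (hA : A.Nonempty)
    {s : ℕ → Set α} (hs : Antitone s) (n : ℕ) :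
    ∃ y ∈ A, ∀ k < n, (A ∩ s k).Nonempty → y ∈ s k := by
  induction n with
  | zero =>
    obtain ⟨y, hyA⟩ := hA
    exact ⟨y, hyA, fun k hk => absurd hk k.not_lt_zero⟩
  | succ n ih =>
    by_cases hn : (A ∩ s n).Nonempty
    · obtain ⟨y, hyA, hys⟩ := hn
      exact ⟨y, hyA, fun k hk _ => hs (Nat.le_of_lt_succ hk) hys⟩
    · obtain ⟨y, hyA, hy⟩ := ih
      refine ⟨y, hyA, fun k hk hmeet => ?_⟩
      obtain hkn | rfl := Nat.lt_succ_iff_lt_or_eq.1 hk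
      · exact hy k hkn hmeet
      · exact absurd hmeet hn

theorem exists_seq_mem_tendsto_of_eventually_inter_nonempty {α : Type*} {l : Filter α}
    [l.IsCountablyGenerated] {A : ℕ → Set α} (hA : ∀ n, (A n).Nonempty)
    (hl : ∀ s ∈ l, ∀ᶠ n in atTop, (A n ∩ s).Nonempty) :
    ∃ u : ℕ → α, (∀ n, u n ∈ A n) ∧ Tendsto u atTop l := by
  obtain ⟨s, hs⟩ := l.exists_antitone_basis
  choose u huA hus using fun n => exists_mem_forall_lt_mem_of_antitone (hA n) hs.antitone n
  refine ⟨u, huA, hs.tendsto_right_iff.2 fun k _ => ?_⟩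
  filter_upwards [hl _ (hs.mem k), eventually_gt_atTop k] with n hmeet hkn
  exact hus n k hkn hmeet

theorem exists_strictMono_forall_eventuallyConst {ι β : Type*} [Countable ι] [Finite β]
    (f : ι → ℕ → β) :
    ∃ φ : ℕ → ℕ, StrictMono φ ∧ ∀ i, EventuallyConst (f i ∘ φ) atTop := by
  let _ : TopologicalSpace β := ⊥
  have : DiscreteTopology β := ⟨rfl⟩
  obtain ⟨g, φ, hφ, hlim⟩ := CompactSpace.tendsto_subseq fun n i => f i n
  refine ⟨φ, hφ, fun i => EventuallyConst.of_tendsto (x := g i) ?_⟩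
  rw [← nhds_discrete]
  exact tendsto_pi_nhds.1 hlim i

section KuratowskiLimits

variable {X : Type*} [TopologicalSpace X] {A : ℕ → Set X} {x : X}

theorem kLiminf_subset_kLimsup (A : ℕ → Set X) : KLiminf A ⊆ KLimsup A :=
  fun _ ⟨u, hu, hux⟩ => ⟨id, strictMono_id, u, hu, hux⟩

theorem kConv_kLiminf_of_kLimsup_subset (h : KLimsup A ⊆ KLiminf A) : KConv A (KLiminf A) :=
  ⟨rfl, h.antisymm (kLiminf_subset_kLimsup A)⟩

theorem mem_kLiminf_iff [(𝓝 x).IsCountablyGenerated] :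
    x ∈ KLiminf A ↔
      (∀ n, (A n).Nonempty) ∧ ∀ U ∈ 𝓝 x, ∀ᶠ n in atTop, (A n ∩ U).Nonempty := by
  refine ⟨?_, fun ⟨hA, hx⟩ => exists_seq_mem_tendsto_of_eventually_inter_nonempty hA hx⟩
  rintro ⟨u, hu, hux⟩
  exact ⟨fun n => ⟨u n, hu n⟩, fun U hU => (hux.eventually_mem hU).mono fun n hn => ⟨u n, hu n, hn⟩⟩

theorem frequently_inter_nonempty_of_mem_kLimsup (hx : x ∈ KLimsup A) {U : Set X}
    (hU : U ∈ 𝓝 x) : ∃ᶠ n in atTop, (A n ∩ U).Nonempty := by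
  obtain ⟨φ, hφ, u, hu, hux⟩ := hx
  have hmeet : ∀ᶠ n in atTop, (A (φ n) ∩ U).Nonempty :=
    (hux.eventually_mem hU).mono fun n hn => ⟨u n, hu n, hn⟩
  exact hφ.tendsto_atTop.frequently hmeet.frequently

theorem kLimsup_eq_empty_of_eventually_eq_empty (hA : ∀ᶠ n in atTop, A n = ∅) :
    KLimsup A = ∅ := by
  refine Set.eq_empty_of_forall_notMem fun x hx => ?_
  obtain ⟨n, hmeet, hempty⟩ :=
    ((frequently_inter_nonempty_of_mem_kLimsup hx univ_mem).and_eventually hA).exists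
  exact hmeet.left.ne_empty hempty

theorem isClosed_kLiminf [FirstCountableTopology X] (A : ℕ → Set X) : IsClosed (KLiminf A) := by
  refine isClosed_of_closure_subset fun x hx => mem_kLiminf_iff.2 ⟨?_, fun U hU => ?_⟩
  · obtain ⟨y, hy⟩ := closure_nonempty_iff.1 ⟨x, hx⟩
    exact (mem_kLiminf_iff.1 hy).1
  · obtain ⟨V, hVU, hV, hxV⟩ := mem_nhds_iff.1 hU
    obtain ⟨y, hyV, hy⟩ := mem_closure_iff.1 hx V hV hxV
    exact (mem_kLiminf_iff.1 hy).2 U (mem_of_superset (hV.mem_nhds hyV) hVU)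

theorem kLimsup_subset_kLiminf_of_eventuallyConst_inter_nonempty [FirstCountableTopology X]
    {B : Set (Set X)} (hB : TopologicalSpace.IsTopologicalBasis B)
    (hA : ∀ n, (A n).Nonempty)
    (hconst : ∀ U ∈ B, EventuallyConst (fun n => (A n ∩ U).Nonempty) atTop) :
    KLimsup A ⊆ KLiminf A := by
  refine fun x hx => mem_kLiminf_iff.2 ⟨hA, fun U hU => ?_⟩
  obtain ⟨V, hVB, hxV, hVU⟩ := hB.mem_nhds_iff.1 hU
  have hfreq : ∃ᶠ n in atTop, (A n ∩ V).Nonempty :=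
    frequently_inter_nonempty_of_mem_kLimsup hx (hB.mem_nhds hVB hxV)
  have hev : ∀ᶠ n in atTop, (A n ∩ V).Nonempty :=
    (eventuallyConst_pred.1 (hconst V hVB)).resolve_right hfreq
  exact hev.mono fun n hn => hn.mono (Set.inter_subset_inter_right _ hVU)

variable [SecondCountableTopology X]

theorem exists_strictMono_kLimsup_subset_kLiminf_of_nonempty (hA : ∀ n, (A n).Nonempty) :
    ∃ φ : ℕ → ℕ, StrictMono φ ∧ KLimsup (A ∘ φ) ⊆ KLiminf (A ∘ φ) := by
  obtain ⟨φ, hφ, hconst⟩ := exists_strictMono_forall_eventuallyConst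
    fun (U : TopologicalSpace.countableBasis X) n => (A n ∩ U).Nonempty
  exact ⟨φ, hφ, kLimsup_subset_kLiminf_of_eventuallyConst_inter_nonempty
    (TopologicalSpace.isBasis_countableBasis X) (fun n => hA (φ n)) fun U hU => hconst ⟨U, hU⟩⟩

theorem exists_strictMono_kLimsup_subset_kLiminf (A : ℕ → Set X) :
    ∃ φ : ℕ → ℕ, StrictMono φ ∧ KLimsup (A ∘ φ) ⊆ KLiminf (A ∘ φ) := by
  by_cases h : ∃ᶠ n in atTop, (A n).Nonempty
  · obtain ⟨ψ, hψ, hne⟩ := extraction_of_frequently_atTop h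
    obtain ⟨φ, hφ, hsub⟩ :=
      exists_strictMono_kLimsup_subset_kLiminf_of_nonempty (A := A ∘ ψ) hne
    exact ⟨ψ ∘ φ, hψ.comp hφ, hsub⟩
  · have hempty : ∀ᶠ n in atTop, A n = ∅ :=
      (not_frequently.1 h).mono fun _ => Set.not_nonempty_iff_eq_empty.1
    exact ⟨id, strictMono_id,
      (kLimsup_eq_empty_of_eventually_eq_empty hempty).trans_subset (Set.empty_subset _)⟩

end KuratowskiLimits

theorem stmt_15_general {X : Type*} [TopologicalSpace X] [SecondCountableTopology X]
    (E : ℕ → Set X) :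
    ∃ φ : ℕ → ℕ, StrictMono φ ∧
      ∃ S : Set X, IsClosed S ∧ KConv (fun n => E (φ n)) S := by
  obtain ⟨φ, hφ, hsub⟩ := exists_strictMono_kLimsup_subset_kLiminf E
  exact ⟨φ, hφ, KLiminf (E ∘ φ), isClosed_kLiminf _, kConv_kLiminf_of_kLimsup_subset hsub⟩

/-- Zarankiewicz: in a second countable metric space, every sequence of
sets admits a subsequence converging in the Painlevé–Kuratowski sense to some closed
set. -/
theorem stmt_15 {X : Type*} [MetricSpace X] [SecondCountableTopology X]
    (E : ℕ → Set X) :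
    ∃ φ : ℕ → ℕ, StrictMono φ ∧
      ∃ S : Set X, IsClosed S ∧ KConv (fun n => E (φ n)) S :=
  stmt_15_general E
end

section
/- Let X be a locally compact metric space and let {E_n} be a sequence of connected subsets of X converging in the Painlevé–Kuratowski sense to a nonempty compact set E ⊂ X. Then: (1) for every open neighbourhood Ω of E there exists N ∈ ℕ such that E_n ⊂ Ω for all n > N; and (2) there exists N ∈ ℕ such that the union ⋃_{n > N} E_n is relatively compact in X. -/
/-!
Squeeze an open set `V` with compact closure between `S` and `Ω`. The upper limit misses the
compact set `frontier V`, hence so does `E n` for large `n`, since otherwise points of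
`E n ∩ frontier V` would accumulate at a point of the upper limit. The lower limit has a point in
`V`, so `E n` meets `V` for large `n`, and a connected set that meets `V` but not its frontier is
contained in `V`.
-/

open Filter Topology Metric MeasureTheory

theorem subset_of_isPreconnected_of_disjoint_frontier {X : Type*} [TopologicalSpace X]
    {s t : Set X} (hs : IsPreconnected s) (hst : (s ∩ t).Nonempty)
    (hdisj : Disjoint s (frontier t)) : s ⊆ t := by
  have hcover : s ⊆ interior t ∪ (closure t)ᶜ := by
    rw [← interior_compl, ← compl_frontier_eq_union_interior]
    exact hdisj.subset_compl_right
  obtain ⟨x, hxs, hxt⟩ := hst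
  have hx : x ∈ interior t := (hcover hxs).resolve_right fun h => h (subset_closure hxt)
  have hsep : Disjoint (interior t) (closure t)ᶜ :=
    Set.disjoint_compl_right_iff_subset.mpr interior_subset_closure
  exact (hs.subset_left_of_subset_union isOpen_interior isClosed_closure.isOpen_compl hsep hcover
    ⟨x, hxs, hx⟩).trans interior_subset

section KuratowskiLimits

variable {X : Type*} [TopologicalSpace X] {E : ℕ → Set X}

theorem KLiminf_subset_KLimsup : KLiminf E ⊆ KLimsup E :=
  fun _ ⟨u, hu, hlim⟩ => ⟨id, strictMono_id, u, hu, hlim⟩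

theorem eventually_inter_nonempty_of_KLiminf_inter_nonempty {U : Set X} (hU : IsOpen U)
    (hne : (KLiminf E ∩ U).Nonempty) : ∀ᶠ n in atTop, (E n ∩ U).Nonempty := by
  obtain ⟨x, ⟨u, hu, hlim⟩, hxU⟩ := hne
  filter_upwards [hlim.eventually_mem (hU.mem_nhds hxU)] with n hn
  exact ⟨u n, hu n, hn⟩

theorem eventually_disjoint_of_disjoint_KLimsup {K : Set X} (hK : IsSeqCompact K)
    (hdisj : Disjoint (KLimsup E) K) : ∀ᶠ n in atTop, Disjoint (E n) K := by
  by_contra hfreq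
  obtain ⟨φ, hφ, hmeet⟩ := extraction_of_frequently_atTop (not_eventually.mp hfreq)
  choose u huE huK using fun k => Set.not_disjoint_iff.mp (hmeet k)
  obtain ⟨x, hxK, ψ, hψ, hlim⟩ := hK huK
  have hx : x ∈ KLimsup E := ⟨φ ∘ ψ, hφ.comp hψ, u ∘ ψ, fun k => huE (ψ k), hlim⟩
  exact Set.disjoint_left.mp hdisj hx hxK

theorem eventually_subset_of_disjoint_KLimsup_frontier (hconn : ∀ n, IsPreconnected (E n))
    {V : Set X} (hfrontier : IsSeqCompact (frontier V))
    (hdisj : Disjoint (KLimsup E) (frontier V)) (hne : (KLiminf E ∩ interior V).Nonempty) :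
    ∀ᶠ n in atTop, E n ⊆ V := by
  filter_upwards [eventually_disjoint_of_disjoint_KLimsup hfrontier hdisj,
    eventually_inter_nonempty_of_KLiminf_inter_nonempty isOpen_interior hne] with n hmiss hmeet
  exact subset_of_isPreconnected_of_disjoint_frontier (hconn n)
    (hmeet.mono (Set.inter_subset_inter_right _ interior_subset)) hmiss

theorem eventually_subset_of_KLimsup_subset [FirstCountableTopology X]
    (hconn : ∀ n, IsPreconnected (E n)) (hne : (KLiminf E).Nonempty) {V : Set X} (hV : IsOpen V)
    (hVcpt : IsCompact (closure V)) (hsub : KLimsup E ⊆ V) : ∀ᶠ n in atTop, E n ⊆ V := by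
  have hfrontier : IsCompact (frontier V) :=
    hVcpt.of_isClosed_subset isClosed_frontier frontier_subset_closure
  have hdisj : Disjoint (KLimsup E) (frontier V) :=
    (disjoint_frontier_iff_isOpen.mpr hV).symm.mono_left hsub
  have hmeet : (KLiminf E ∩ interior V).Nonempty := by
    rwa [hV.interior_eq, Set.inter_eq_left.mpr (KLiminf_subset_KLimsup.trans hsub)]
  exact eventually_subset_of_disjoint_KLimsup_frontier hconn hfrontier.isSeqCompact hdisj hmeet

end KuratowskiLimits

theorem stmt_18_general {X : Type*} [TopologicalSpace X] [R1Space X] [FirstCountableTopology X]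
    [WeaklyLocallyCompactSpace X] {E : ℕ → Set X} (hconn : ∀ n, IsPreconnected (E n))
    {S : Set X} (hScpt : IsCompact S) (hne : (KLiminf E).Nonempty) (hsub : KLimsup E ⊆ S) :
    (∀ Ω : Set X, IsOpen Ω → S ⊆ Ω → ∃ N : ℕ, ∀ n > N, E n ⊆ Ω) ∧
    (∃ N : ℕ, IsCompact (closure (⋃ n > N, E n))) := by
  have hnhds : ∀ Ω : Set X, IsOpen Ω → S ⊆ Ω → ∃ N : ℕ, ∀ n > N, E n ⊆ Ω := by
    intro Ω hΩ hSΩ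
    obtain ⟨V, hV, hSV, hVΩ, hVcpt⟩ := exists_open_between_and_isCompact_closure hScpt hΩ hSΩ
    have hev := eventually_subset_of_KLimsup_subset hconn hne hV hVcpt (hsub.trans hSV)
    obtain ⟨N, -, hN⟩ := atTop_basis_Ioi.eventually_iff.mp hev
    exact ⟨N, fun n hn => (hN hn).trans (subset_closure.trans hVΩ)⟩
  obtain ⟨K, hKcpt, hSK⟩ := exists_compact_superset hScpt
  obtain ⟨N, hN⟩ := hnhds (interior K) isOpen_interior hSK
  have htail : ⋃ n > N, E n ⊆ K := Set.iUnion₂_subset fun n hn => (hN n hn).trans interior_subset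
  exact ⟨hnhds, N, hKcpt.closure_of_subset htail⟩

/-- if connected subsets `E_n` of a locally compact metric space
converge in the Painlevé–Kuratowski sense to a nonempty compact set `E`, then (1)
every neighbourhood of `E` eventually contains all the `E_n`, and (2) some tail union
`⋃_{n > N} E_n` is relatively compact. -/
theorem stmt_18 {X : Type*} [MetricSpace X] [LocallyCompactSpace X]
    (E : ℕ → Set X) (hconn : ∀ n, IsConnected (E n))
    (S : Set X) (hScpt : IsCompact S) (hSne : S.Nonempty)
    (hK : KConv E S) :
    (∀ Ω : Set X, IsOpen Ω → S ⊆ Ω → ∃ N : ℕ, ∀ n > N, E n ⊆ Ω) ∧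
    (∃ N : ℕ, IsCompact (closure (⋃ n > N, E n))) :=
  stmt_18_general (fun n => (hconn n).isPreconnected) hScpt (hK.1.symm ▸ hSne) hK.2.subset
end
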